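/- arXiv:2303.12877 — 4 statements merged into one kernel-verified Lean document; each statement's English description precedes it below -/
import Mathlib

section
/- Let B be the 4×4 real matrix with rows (0,0,0,0), (0,0,0,0), (1,1,−1,−1), (1,−1,−1,1), let C = (0,0,−√2,0) ∈ ℝ⁴, U = [0,1]⁴, W = [0,1], and let P := BU ⊖ (−CW) be the Minkowski difference. Then: (i) for every vector p = (0, 0, p₃, p₄) with p₃² + p₄² ≤ (√2 − 1)² and every w ∈ [0,1], there exists u ∈ [0,1]⁴ such that Bu = p − Cw (hence the Euclidean ball of radius √2 − 1 centered at the origin of the (e₃, e₄)-plane is contained in P); and (ii) √2 − 1 is the largest such radius: for every ρ > √2 − 1 there exist p₃, p₄ with p₃² + p₄² ≤ ρ² and some w ∈ [0,1] such that no u ∈ [0,1]⁴ satisfies Bu = (0, 0, p₃, p₄) − Cw. -/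
/-!
In the `(e₃, e₄)`-plane, `(a, b)` is reachable as `Bu` with `u ∈ [0,1]⁴` exactly when
`|a + b| ≤ 2` and `|a - b| ≤ 2`, because `a + b = 2 (u₀ - u₂)` and `a - b = 2 (u₁ - u₃)`.
The malfunctioning thruster shifts `p` to `(p₃ + √2 w, p₄)`, and by Cauchy–Schwarz a disc of
radius `r` satisfies `|p₃ ± p₄| ≤ √2 r`. Hence the binding constraint is `√2 r + √2 ≤ 2`, that is
`r ≤ √2 - 1`; it is attained at `w = 1` in the diagonal direction `p₃ = p₄`.
-/

open scoped Matrix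

/-- The control matrix after losing authority over thruster no. 4. -/
noncomputable def Bmat : Matrix (Fin 4) (Fin 4) ℝ :=
  !![0, 0, 0, 0;
     0, 0, 0, 0;
     1, 1, -1, -1;
     1, -1, -1, 1]

/-- The column of the malfunctioning thruster no. 4. -/
noncomputable def Cvec : Fin 4 → ℝ := ![0, 0, -Real.sqrt 2, 0]

lemma Bmat_mulVec_eq_iff (u : Fin 4 → ℝ) (p₃ p₄ w : ℝ) :
    Bmat.mulVec u = ![0, 0, p₃, p₄] - w • Cvec ↔
      u 0 + u 1 - u 2 - u 3 = p₃ + √2 * w ∧ u 0 - u 1 - u 2 + u 3 = p₄ := by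
  constructor
  · intro h
    have h2 := congrFun h 2
    have h3 := congrFun h 3
    simp [Bmat, Cvec, Matrix.mulVec, dotProduct, Fin.sum_univ_four] at h2 h3
    constructor <;> linarith
  · rintro ⟨h2, h3⟩
    funext i
    fin_cases i <;> simp [Bmat, Cvec, Matrix.mulVec, dotProduct, Fin.sum_univ_four] <;> linarith

/-- The Cauchy–Schwarz bound `|p₃ + p₄| ≤ √2 r` at the radius `r = √2 - 1`. -/
lemma abs_add_le_of_mem_disc {p₃ p₄ : ℝ} (h : p₃ ^ 2 + p₄ ^ 2 ≤ (√2 - 1) ^ 2) :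
    |p₃ + p₄| ≤ 2 - √2 := by
  have hs : √2 ^ 2 = 2 := Real.sq_sqrt (by norm_num)
  have hle : √2 ≤ 2 := by nlinarith [Real.sqrt_nonneg 2]
  apply abs_le_of_sq_le_sq _ (by linarith)
  nlinarith [sq_nonneg (p₃ - p₄)]

/-- **ρ_max = √2 − 1 for the loss of thruster no. 4.**
(i) Every vector `(0,0,p₃,p₄)` of the closed `(e₃,e₄)`-ball of radius `√2 − 1`
belongs to the Minkowski difference `P = BU ⊖ (−CW)`: for every `w ∈ [0,1]` some
`u ∈ [0,1]⁴` satisfies `Bu = p − Cw`.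
(ii) `√2 − 1` is the largest such radius. -/
theorem rho_max_thruster_four :
    (∀ p₃ p₄ : ℝ, p₃ ^ 2 + p₄ ^ 2 ≤ (Real.sqrt 2 - 1) ^ 2 →
      ∀ w ∈ Set.Icc (0:ℝ) 1,
        ∃ u : Fin 4 → ℝ, (∀ i, u i ∈ Set.Icc (0:ℝ) 1) ∧
          Bmat.mulVec u = ![0, 0, p₃, p₄] - w • Cvec) ∧
    (∀ ρ : ℝ, ρ > Real.sqrt 2 - 1 →
      ∃ p₃ p₄ : ℝ, p₃ ^ 2 + p₄ ^ 2 ≤ ρ ^ 2 ∧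
        ∃ w ∈ Set.Icc (0:ℝ) 1,
          ∀ u : Fin 4 → ℝ, (∀ i, u i ∈ Set.Icc (0:ℝ) 1) →
            Bmat.mulVec u ≠ ![0, 0, p₃, p₄] - w • Cvec) := by
  have hs : √2 ^ 2 = 2 := Real.sq_sqrt (by norm_num)
  have h0 : 0 ≤ √2 := Real.sqrt_nonneg 2
  have h1 : 1 ≤ √2 := by nlinarith
  refine ⟨?_, ?_⟩
  · rintro p₃ p₄ hp w ⟨hw0, hw1⟩
    have hadd := abs_le.1 (abs_add_le_of_mem_disc hp)
    have hsub := abs_le.1 (abs_add_le_of_mem_disc (p₃ := p₃) (p₄ := -p₄) (by simpa using hp))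
    have hx0 : 0 ≤ √2 * w := mul_nonneg h0 hw0
    have hx1 : √2 * w ≤ √2 := mul_le_of_le_one_right h0 hw1
    -- Each opposing pair of thrusters is placed symmetrically about `1 / 2`.
    refine ⟨![1 / 2 + (p₃ + √2 * w + p₄) / 4, 1 / 2 + (p₃ + √2 * w - p₄) / 4,
      1 / 2 - (p₃ + √2 * w + p₄) / 4, 1 / 2 - (p₃ + √2 * w - p₄) / 4], ?_, ?_⟩
    · intro i
      fin_cases i <;> simp <;> constructor <;> linarith
    · rw [Bmat_mulVec_eq_iff]
      simp
      constructor <;> ring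
  · intro ρ hρ
    refine ⟨√2 / 2 * ρ, √2 / 2 * ρ, ?_, 1, by simp, ?_⟩
    · apply le_of_eq
      linear_combination (ρ ^ 2 / 2) * hs
    · intro u hu h
      rw [Bmat_mulVec_eq_iff] at h
      have hu0 := (hu 0).2
      have hu2 := (hu 2).1
      -- Adding the two coordinates gives `√2 ρ + √2 = 2 (u 0 - u 2) ≤ 2`.
      nlinarith [h.1, h.2]
end

section
/- Let Ω be a real number and let A be the 4×4 real Clohessy–Wiltshire matrix with rows (0,0,1,0), (0,0,0,1), (3Ω²,0,0,2Ω), (0,0,−2Ω,0). Then for every natural number n, the matrix powers satisfy A^{2n+2} = (−1)ⁿ Ω^{2n} A² and A^{2n+3} = (−1)ⁿ Ω^{2n} A³. -/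
/-! By Cayley–Hamilton, `A ^ 4 = -Ω ^ 2 • A ^ 2`, so each multiplication by `A ^ 2` past the second
power contributes a factor `-Ω ^ 2`. Induction gives the even powers, and one more multiplication
by `A` the odd ones. -/

open scoped Matrix

/-- The 4×4 Clohessy–Wiltshire matrix. -/
noncomputable def CW (Ω : ℝ) : Matrix (Fin 4) (Fin 4) ℝ :=
  !![0,       0, 1,      0;
     0,       0, 0,      1;
     3 * Ω^2, 0, 0,      2 * Ω;
     0,       0, -2 * Ω, 0]

/-- Cayley–Hamilton for `CW Ω`, whose characteristic polynomial is `X ^ 4 + Ω ^ 2 * X ^ 2`. -/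
lemma CW_pow_four (Ω : ℝ) : CW Ω ^ 4 = (-Ω ^ 2) • CW Ω ^ 2 := by
  have h2 : CW Ω ^ 2 = !![3 * Ω ^ 2, 0, 0, 2 * Ω;
                          0, 0, -2 * Ω, 0;
                          0, 0, -Ω ^ 2, 0;
                          -6 * Ω ^ 3, 0, 0, -4 * Ω ^ 2] := by
    rw [pow_two]
    ext i j
    fin_cases i <;> fin_cases j <;> simp [CW, Matrix.mul_apply, Fin.sum_univ_four] <;> ring
  rw [show CW Ω ^ 4 = CW Ω ^ 2 * CW Ω ^ 2 from pow_add _ 2 2, h2]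
  ext i j
  fin_cases i <;> fin_cases j <;> simp [Matrix.mul_apply, Fin.sum_univ_four] <;> ring

/-- **Power recursion for the Clohessy–Wiltshire matrix**:
`A^(2n+2) = (−1)ⁿ Ω^(2n) A²` and `A^(2n+3) = (−1)ⁿ Ω^(2n) A³`. -/
theorem cw_pow_recursion (Ω : ℝ) (n : ℕ) :
    CW Ω ^ (2 * n + 2) = ((-1 : ℝ) ^ n * Ω ^ (2 * n)) • CW Ω ^ 2 ∧
    CW Ω ^ (2 * n + 3) = ((-1 : ℝ) ^ n * Ω ^ (2 * n)) • CW Ω ^ 3 := by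
  have even_pow : CW Ω ^ (2 * n + 2) = ((-1 : ℝ) ^ n * Ω ^ (2 * n)) • CW Ω ^ 2 := by
    induction n with
    | zero => simp
    | succ k ih =>
      rw [show 2 * (k + 1) + 2 = (2 * k + 2) + 2 by ring, pow_add, ih, smul_mul_assoc,
        ← pow_add, CW_pow_four, smul_smul]
      congr 1
      ring
  refine ⟨even_pow, ?_⟩
  rw [pow_succ, even_pow, smul_mul_assoc, ← pow_succ]
end

section
/- Let Ω ≠ 0 be a real number and let A be the 4×4 real Clohessy–Wiltshire matrix with rows (0,0,1,0), (0,0,0,1), (3Ω²,0,0,2Ω), (0,0,−2Ω,0). If v ∈ ℝ⁴ is nonzero and λ ∈ ℝ is such that Aᵀ v = λ v, then λ = 0 and v is a scalar multiple of the vector (2Ω, 0, 0, 1). In other words, all real eigenvectors of Aᵀ are scalar multiples of (2Ω, 0, 0, 1). -/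
/-!
Coordinatewise, `Aᵀ v = lam v` reads `3Ω² v₂ = lam v₀`, `0 = lam v₁`, `v₀ - 2Ω v₃ = lam v₂`,
`v₁ + 2Ω v₂ = lam v₃`. If `lam ≠ 0`, then `v₁ = 0`, and eliminating `v₀` and `v₃` gives
`(Ω² + lam²) v₂ = 0`; hence `v₂ = 0` and then `v = 0`. So `lam = 0`, and the equations reduce
to `v₁ = v₂ = 0` and `v₀ = 2Ω v₃`.
-/

open scoped Matrix

/-- **Real eigenvectors of `Aᵀ` for the Clohessy–Wiltshire matrix**: if `Ω ≠ 0` and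
`Aᵀ v = λ v` with `v ≠ 0`, then `λ = 0` and `v` is a scalar multiple of `(2Ω, 0, 0, 1)`. -/
theorem cw_transpose_real_eigenvectors (Ω : ℝ) (hΩ : Ω ≠ 0)
    (v : Fin 4 → ℝ) (hv : v ≠ 0) (lam : ℝ)
    (heig : (CW Ω)ᵀ.mulVec v = lam • v) :
    lam = 0 ∧ ∃ c : ℝ, v = c • ![2 * Ω, 0, 0, 1] := by
  have e0 := congrFun heig 0
  have e1 := congrFun heig 1
  have e2 := congrFun heig 2
  have e3 := congrFun heig 3
  simp [CW, Matrix.mulVec, dotProduct, Fin.sum_univ_four] at e0 e1 e2 e3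
  have hl : lam = 0 := by
    by_contra hl
    have h1 : v 1 = 0 := by simpa [hl] using e1
    -- Multiplying the third coordinate equation by `lam` and eliminating `v 0`, `v 3`.
    have key : (Ω ^ 2 + lam ^ 2) * v 2 = 0 := by
      linear_combination -lam * e2 - e0 + 2 * Ω * e3 - 2 * Ω * h1
    have hpos : Ω ^ 2 + lam ^ 2 ≠ 0 := by positivity
    have h2 : v 2 = 0 := (mul_eq_zero.mp key).resolve_left hpos
    have h0 : v 0 = 0 := by simpa [h2, hl] using e0
    have h3 : v 3 = 0 := by simpa [h1, h2, hl] using e3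
    apply hv
    ext i
    fin_cases i <;> simp [h0, h1, h2, h3]
  subst hl
  have h2 : v 2 = 0 := by simpa [hΩ] using e0
  have h1 : v 1 = 0 := by simpa [h2] using e3
  refine ⟨rfl, v 3, ?_⟩
  ext i
  fin_cases i
  · simp
    linear_combination e2
  · simp [h1]
  · simp [h2]
  · simp
end

section
/- Let n ≥ 1, let Ã, P, Q ∈ ℝ^{n×n} with P and Q symmetric positive definite and satisfying the Lyapunov equation Ãᵀ P + P Ã = −Q. Set α := λ_min(Q)/(2 λ_max(P)) and let δ ≥ 0. Suppose Y : [0, ∞) → ℝⁿ is differentiable with Ẏ(t) = Ã Y(t) + d(t) for all t ≥ 0, where d : [0, ∞) → ℝⁿ satisfies ‖d(t)‖_P ≤ δ for all t ≥ 0. Then for all t ≥ 0, ‖Y(t)‖_P ≤ e^{−αt} ( ‖Y(0)‖_P − δ/α ) + δ/α; in particular ‖Y(t)‖_P ≤ max( ‖Y(0)‖_P, δ/α ) for all t ≥ 0. -/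
/-!
With `V = Yᵀ P Y`, the Lyapunov equation, the Rayleigh bounds `λ_min(Q) ‖x‖² ≤ xᵀ Q x` and
`xᵀ P x ≤ λ_max(P) ‖x‖²` (`rayleigh_lower`, `rayleigh_upper`), and Cauchy–Schwarz for the form of
`P` (`dotProduct_mulVec_le_pNorm`) give
`V' ≤ -2 α V + 2 δ √V`. Formally `w = √V` then satisfies `w' ≤ -α w + δ`, but `√V` need not be
differentiable where `V` vanishes. Instead, `w = √(V + ε²)` is differentiable for every `ε > 0` and
satisfies `w' ≤ -α w + (δ + α ε)`, so that `e^{α t} (w - (δ + α ε) / α)` is nonincreasing.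
Since `√V ≤ w ≤ √V + ε`, this is the desired bound up to an error `ε`, which is arbitrary
(`scalar_comparison`). The bound by the maximum follows because the exponential bound is a convex
combination of `‖Y(0)‖_P` and `δ / α`.
-/

open scoped Matrix

/-- The `P`-norm `‖x‖_P = √(xᵀ P x)` associated with a positive definite matrix `P`. -/
noncomputable def pNorm {n : ℕ} (P : Matrix (Fin n) (Fin n) ℝ) (x : Fin n → ℝ) : ℝ :=
  Real.sqrt (x ⬝ᵥ P.mulVec x)

theorem posSemidef_of_eigenvalues {n : ℕ} {M : Matrix (Fin n) (Fin n) ℝ} (hM : M.IsHermitian)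
    (h : ∀ (t : ℝ) (v : Fin n → ℝ), v ≠ 0 → M *ᵥ v = t • v → 0 ≤ t) : M.PosSemidef := by
  rw [hM.posSemidef_iff_eigenvalues_nonneg]
  intro i
  refine h _ _ ?_ (hM.mulVec_eigenvectorBasis i)
  intro h0
  apply hM.eigenvectorBasis.orthonormal.ne_zero i
  ext j
  exact congrFun h0 j

theorem eigenvalue_pos {n : ℕ} {M : Matrix (Fin n) (Fin n) ℝ} (hM : M.PosDef)
    {t : ℝ} {v : Fin n → ℝ} (hv : v ≠ 0) (h : M *ᵥ v = t • v) : 0 < t := by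
  have h1 := hM.dotProduct_mulVec_pos hv
  rw [h, star_trivial, dotProduct_smul, smul_eq_mul] at h1
  have h2 : 0 ≤ v ⬝ᵥ v := by simpa using dotProduct_star_self_nonneg v
  exact pos_of_mul_pos_left h1 h2

theorem rayleigh_lower {n : ℕ} {Q : Matrix (Fin n) (Fin n) ℝ} (hQ : Q.IsHermitian) {l : ℝ}
    (hl : l ∈ lowerBounds {t : ℝ | ∃ v : Fin n → ℝ, v ≠ 0 ∧ Q *ᵥ v = t • v}) (x : Fin n → ℝ) :
    l * (x ⬝ᵥ x) ≤ x ⬝ᵥ Q *ᵥ x := by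
  have h : (Q - l • (1 : Matrix (Fin n) (Fin n) ℝ)).PosSemidef := by
    refine posSemidef_of_eigenvalues ?_ ?_
    · exact hQ.sub (by simp [Matrix.IsHermitian])
    · intro t v hv h
      rw [Matrix.sub_mulVec, Matrix.smul_mulVec, Matrix.one_mulVec, sub_eq_iff_eq_add,
        ← add_smul] at h
      have := hl ⟨v, hv, h⟩
      linarith
  have := h.dotProduct_mulVec_nonneg x
  rw [star_trivial, Matrix.sub_mulVec, Matrix.smul_mulVec, Matrix.one_mulVec, dotProduct_sub,
    dotProduct_smul, smul_eq_mul] at this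
  linarith

theorem rayleigh_upper {n : ℕ} {P : Matrix (Fin n) (Fin n) ℝ} (hP : P.IsHermitian) {l : ℝ}
    (hl : l ∈ upperBounds {t : ℝ | ∃ v : Fin n → ℝ, v ≠ 0 ∧ P *ᵥ v = t • v}) (x : Fin n → ℝ) :
    x ⬝ᵥ P *ᵥ x ≤ l * (x ⬝ᵥ x) := by
  have h := rayleigh_lower (Q := -P) (l := -l) hP.neg ?_ x
  · rw [Matrix.neg_mulVec, dotProduct_neg] at h
    linarith
  · rintro t ⟨v, hv, h⟩
    rw [Matrix.neg_mulVec, neg_eq_iff_eq_neg, ← neg_smul] at h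
    have := hl ⟨v, hv, h⟩
    linarith

theorem dotProduct_mulVec_symm {n : ℕ} {P : Matrix (Fin n) (Fin n) ℝ} (hP : P.IsHermitian)
    (x y : Fin n → ℝ) : x ⬝ᵥ P *ᵥ y = y ⬝ᵥ P *ᵥ x := by
  have hT : Pᵀ = P := by simpa using hP.eq
  rw [Matrix.dotProduct_mulVec, ← Matrix.mulVec_transpose, hT, dotProduct_comm]

/-- Cauchy–Schwarz for the `P`-inner product. -/
theorem dotProduct_mulVec_le_pNorm {n : ℕ} {P : Matrix (Fin n) (Fin n) ℝ} (hP : P.PosSemidef)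
    (x y : Fin n → ℝ) : x ⬝ᵥ P *ᵥ y ≤ pNorm P x * pNorm P y := by
  have hnn : ∀ z : Fin n → ℝ, 0 ≤ z ⬝ᵥ P *ᵥ z := fun z => by
    simpa using hP.dotProduct_mulVec_nonneg z
  -- `s ↦ ‖x + s y‖_P²` is a nonnegative quadratic polynomial, so its discriminant is nonpositive.
  have hd : discrim (y ⬝ᵥ P *ᵥ y) (2 * (x ⬝ᵥ P *ᵥ y)) (x ⬝ᵥ P *ᵥ x) ≤ 0 := by
    apply discrim_le_zero
    intro s
    have h := hnn (x + s • y)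
    simp only [Matrix.mulVec_add, Matrix.mulVec_smul, dotProduct_add, add_dotProduct,
      dotProduct_smul, smul_dotProduct, smul_eq_mul, dotProduct_mulVec_symm hP.1 y x] at h
    linarith
  unfold pNorm
  rw [← Real.sqrt_mul (hnn x)]
  apply Real.le_sqrt_of_sq_le
  unfold discrim at hd
  linarith

/-- The differential inequality `V' ≤ -2 α V + 2 δ √V` implies the bound that the comparison
principle gives for `√V`, although `√V` may fail to be differentiable at zeros of `V`. -/
theorem scalar_comparison {V V' : ℝ → ℝ} {α δ : ℝ} (hα : 0 < α) (hδ : 0 ≤ δ)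
    (hV0 : ∀ t, 0 ≤ t → 0 ≤ V t) (hV : ∀ t, 0 ≤ t → HasDerivAt V (V' t) t)
    (hV' : ∀ t, 0 ≤ t → V' t ≤ -2 * α * V t + 2 * δ * √(V t)) {t : ℝ} (ht : 0 ≤ t) :
    √(V t) ≤ Real.exp (-α * t) * (√(V 0) - δ / α) + δ / α := by
  refine le_of_forall_pos_le_add fun ε hε => ?_
  set w : ℝ → ℝ := fun s => √(V s + ε ^ 2) with hw
  have hpos : ∀ s, 0 ≤ s → 0 < V s + ε ^ 2 := fun s hs => by
    have := hV0 s hs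
    positivity
  have hwd : ∀ s, 0 ≤ s → HasDerivAt w (V' s / (2 * w s)) s := fun s hs =>
    ((hV s hs).add_const _).sqrt (hpos s hs).ne'
  have hwle : ∀ s, 0 ≤ s → V' s / (2 * w s) ≤ -α * w s + (δ + α * ε) := by
    intro s hs
    have hwpos : 0 < w s := Real.sqrt_pos.2 (hpos s hs)
    have hwsq : w s ^ 2 = V s + ε ^ 2 := Real.sq_sqrt (hpos s hs).le
    have hVw : √(V s) ≤ w s := Real.sqrt_le_sqrt (by nlinarith)
    have hεw : ε ≤ w s := Real.le_sqrt_of_sq_le (by linarith [hV0 s hs])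
    rw [div_le_iff₀ (by positivity)]
    have h1 := mul_le_mul_of_nonneg_left hVw hδ
    have h2 := mul_le_mul_of_nonneg_left hεw (mul_pos hα hε).le
    have h3 : V s = w s ^ 2 - ε ^ 2 := by linarith
    have h4 := hV' s hs
    generalize √(V s) = r at *
    rw [h3] at h4
    nlinarith
  set g : ℝ → ℝ := fun s => Real.exp (α * s) * (w s - (δ / α + ε)) with hg
  have hgd : ∀ s, 0 ≤ s → HasDerivAt g
      (Real.exp (α * s) * α * (w s - (δ / α + ε)) + Real.exp (α * s) * (V' s / (2 * w s))) s := by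
    intro s hs
    have he : HasDerivAt (fun s => Real.exp (α * s)) (Real.exp (α * s) * α) s := by
      simpa using ((hasDerivAt_id s).const_mul α).exp
    exact he.mul ((hwd s hs).sub_const _)
  have hanti : AntitoneOn g (Set.Ici 0) := by
    refine antitoneOn_of_deriv_nonpos (convex_Ici 0)
      (fun s hs => (hgd s hs).continuousAt.continuousWithinAt) ?_ ?_
    · intro s hs
      exact (hgd s (interior_subset hs)).differentiableAt.differentiableWithinAt
    · intro s hs
      have hs' : 0 ≤ s := interior_subset hs
      rw [(hgd s hs').deriv, mul_assoc, ← mul_add]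
      refine mul_nonpos_of_nonneg_of_nonpos (Real.exp_pos _).le ?_
      have h1 : α * (w s - (δ / α + ε)) = α * w s - (δ + α * ε) := by field_simp
      linarith [hwle s hs']
  have hgt : g t ≤ g 0 := hanti Set.self_mem_Ici ht ht
  have hw0 : w 0 ≤ √(V 0) + ε := by
    refine Real.sqrt_le_iff.2 ⟨by positivity, ?_⟩
    nlinarith [Real.sq_sqrt (hV0 0 le_rfl), Real.sqrt_nonneg (V 0)]
  have hwt : √(V t) ≤ w t := Real.sqrt_le_sqrt (by nlinarith)
  have hmul := mul_le_mul_of_nonneg_left hgt (Real.exp_pos (-α * t)).le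
  have hexp : Real.exp (-α * t) * Real.exp (α * t) = 1 := by
    rw [← Real.exp_add]
    simp
  simp only [hg, mul_zero, Real.exp_zero, one_mul] at hmul
  rw [← mul_assoc, hexp, one_mul] at hmul
  have h5 := mul_le_mul_of_nonneg_left
    (show w 0 - (δ / α + ε) ≤ √(V 0) - δ / α by linarith) (Real.exp_pos (-α * t)).le
  linarith

theorem hasDerivAt_quadForm {n : ℕ} {P : Matrix (Fin n) (Fin n) ℝ} (hP : P.IsHermitian)
    {Y : ℝ → Fin n → ℝ} {y' : Fin n → ℝ} {t : ℝ} (h : HasDerivAt Y y' t) :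
    HasDerivAt (fun s => Y s ⬝ᵥ P *ᵥ Y s) (2 * (Y t ⬝ᵥ P *ᵥ y')) t := by
  have hc := hasDerivAt_pi.1 h
  have hPY : ∀ i, HasDerivAt (fun s => (P *ᵥ Y s) i) ((P *ᵥ y') i) t := by
    intro i
    simp only [Matrix.mulVec, dotProduct]
    exact HasDerivAt.fun_sum fun j _ => (hc j).const_mul (P i j)
  have hs : HasDerivAt (fun s => Y s ⬝ᵥ P *ᵥ Y s)
      (∑ i, (y' i * (P *ᵥ Y t) i + Y t i * (P *ᵥ y') i)) t :=
    HasDerivAt.fun_sum fun i _ => (hc i).mul (hPY i)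
  convert hs using 1
  rw [Finset.sum_add_distrib]
  change _ = y' ⬝ᵥ P *ᵥ Y t + Y t ⬝ᵥ P *ᵥ y'
  rw [dotProduct_mulVec_symm hP y' (Y t)]
  ring

/-- **Lyapunov/comparison-lemma bound for a perturbed stable linear system.**
If `Ãᵀ P + P Ã = −Q` with `P, Q ≻ 0`, `α := λ_min(Q)/(2 λ_max(P))`, and
`Ẏ(t) = Ã Y(t) + d(t)` with `‖d(t)‖_P ≤ δ`, then
`‖Y(t)‖_P ≤ e^{−αt}(‖Y(0)‖_P − δ/α) + δ/α ≤ max(‖Y(0)‖_P, δ/α)` for all `t ≥ 0`. -/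
theorem lyapunov_comparison_bound {n : ℕ} (hn : 1 ≤ n)
    (Atil P Q : Matrix (Fin n) (Fin n) ℝ)
    (hP : P.PosDef) (hQ : Q.PosDef)
    (hLyap : Atilᵀ * P + P * Atil = -Q)
    -- `λ_max(P)` and `λ_min(Q)`
    (lmaxP lminQ : ℝ)
    (hlmax : IsGreatest {t : ℝ | ∃ v : Fin n → ℝ, v ≠ 0 ∧ P.mulVec v = t • v} lmaxP)
    (hlmin : IsLeast {t : ℝ | ∃ v : Fin n → ℝ, v ≠ 0 ∧ Q.mulVec v = t • v} lminQ)
    (α : ℝ) (hα : α = lminQ / (2 * lmaxP))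
    (δ : ℝ) (hδ : 0 ≤ δ)
    (Y d : ℝ → Fin n → ℝ)
    (hY : ∀ t : ℝ, 0 ≤ t → HasDerivAt Y (Atil.mulVec (Y t) + d t) t)
    (hd : ∀ t : ℝ, 0 ≤ t → pNorm P (d t) ≤ δ) :
    ∀ t : ℝ, 0 ≤ t →
      pNorm P (Y t) ≤ Real.exp (-α * t) * (pNorm P (Y 0) - δ / α) + δ / α ∧
      pNorm P (Y t) ≤ max (pNorm P (Y 0)) (δ / α) := by
  obtain ⟨⟨vP, hvP, hvP'⟩, hPub⟩ := hlmax
  obtain ⟨⟨vQ, hvQ, hvQ'⟩, hQlb⟩ := hlmin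
  have hlP : 0 < lmaxP := eigenvalue_pos hP hvP hvP'
  have hlQ : 0 < lminQ := eigenvalue_pos hQ hvQ hvQ'
  have hα0 : 0 < α := by rw [hα]; positivity
  have hdecay : ∀ x : Fin n → ℝ, 2 * α * (x ⬝ᵥ P *ᵥ x) ≤ x ⬝ᵥ Q *ᵥ x := by
    intro x
    refine le_trans ?_ (rayleigh_lower hQ.1 hQlb x)
    have h := mul_le_mul_of_nonneg_left (rayleigh_upper hP.1 hPub x)
      (show 0 ≤ 2 * α by positivity)
    have h2 : 2 * α * lmaxP = lminQ := by rw [hα]; field_simp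
    rwa [← mul_assoc, h2] at h
  have hquad : ∀ x : Fin n → ℝ, 2 * (x ⬝ᵥ P *ᵥ (Atil *ᵥ x)) = -(x ⬝ᵥ Q *ᵥ x) := by
    intro x
    have h := congrArg (fun M : Matrix (Fin n) (Fin n) ℝ => x ⬝ᵥ M *ᵥ x) hLyap
    simp only [Matrix.add_mulVec, Matrix.neg_mulVec, dotProduct_add, dotProduct_neg,
      ← Matrix.mulVec_mulVec] at h
    have h1 : x ⬝ᵥ Atilᵀ *ᵥ (P *ᵥ x) = x ⬝ᵥ P *ᵥ (Atil *ᵥ x) := by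
      rw [Matrix.dotProduct_mulVec, Matrix.vecMul_transpose, dotProduct_mulVec_symm hP.1]
    linarith
  intro t ht
  have hmain : pNorm P (Y t) ≤ Real.exp (-α * t) * (pNorm P (Y 0) - δ / α) + δ / α := by
    refine scalar_comparison (V := fun s => Y s ⬝ᵥ P *ᵥ Y s) hα0 hδ (fun s _ => ?_)
      (fun s hs => hasDerivAt_quadForm hP.1 (hY s hs)) (fun s hs => ?_) ht
    · simpa using hP.posSemidef.dotProduct_mulVec_nonneg (Y s)
    · have h1 : Y s ⬝ᵥ P *ᵥ d s ≤ pNorm P (Y s) * δ :=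
        (dotProduct_mulVec_le_pNorm hP.posSemidef _ _).trans
          (mul_le_mul_of_nonneg_left (hd s hs) (Real.sqrt_nonneg _))
      have h2 := hdecay (Y s)
      have h3 := hquad (Y s)
      rw [Matrix.mulVec_add, dotProduct_add]
      change _ ≤ -2 * α * (Y s ⬝ᵥ P *ᵥ Y s) + 2 * δ * pNorm P (Y s)
      linarith
  refine ⟨hmain, hmain.trans ?_⟩
  have he1 : Real.exp (-α * t) ≤ 1 := Real.exp_le_one_iff.2 (by nlinarith)
  have he0 := (Real.exp_pos (-α * t)).le
  have h1 := mul_le_mul_of_nonneg_left (le_max_left (pNorm P (Y 0)) (δ / α)) he0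
  have h2 := mul_le_mul_of_nonneg_left (le_max_right (pNorm P (Y 0)) (δ / α)) (sub_nonneg.2 he1)
  linarith
end
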